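/- There exists a constant c > 0, depending only on d, K₀, κ, α and ℓ, such that c⁻¹ L(|ξ|⁻¹) ≤ ψ(ξ) ≤ c L(|ξ|⁻¹) for all ξ ∈ ℝ^d with |ξ| ≥ 5. -/

import Mathlib

open MeasureTheory Metric Set Filter
open scoped ENNReal Topology RealInnerProductSpace

noncomputable section

/-- `L(r) = ∫_r^1 ℓ(s)/s ds`. -/
def Lfun (ℓ : ℝ → ℝ) (r : ℝ) : ℝ := ∫ s in r..1, ℓ s / s

/-- `ℓ` varies regularly at `0+` with index `ρ`. -/
def RegVaryAt0 (ℓ : ℝ → ℝ) (ρ : ℝ) : Prop :=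
  ∀ lam : ℝ, 0 < lam →
    Filter.Tendsto (fun r => ℓ (lam * r) / ℓ r) (𝓝[>] (0 : ℝ)) (𝓝 (lam ^ ρ))

/-- `ℓ` is bounded away from `0` and `∞` on compact subsets of `(0,1)`. -/
def LocBddAway (ℓ : ℝ → ℝ) : Prop :=
  ∀ a b : ℝ, 0 < a → a ≤ b → b < 1 →
    ∃ m M : ℝ, 0 < m ∧ ∀ s : ℝ, a ≤ s → s ≤ b → m ≤ ℓ s ∧ ℓ s ≤ M

/-- conditions on the (translation invariant) kernel `k`: measurability, nonnegativity,
symmetry, `∫ (1 ∧ |h|²) k(h) dh ≤ K₀` and `κ⁻¹ ℓ(|h|)|h|^{-d} ≤ k(h) ≤ κ ℓ(|h|)|h|^{-d}`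
for `0 < |h| ≤ 1`. -/
def KernelCondsTI (d : ℕ) (K₀ κ : ℝ) (ℓ : ℝ → ℝ)
    (k : EuclideanSpace ℝ (Fin d) → ℝ) : Prop :=
  Measurable k ∧ (∀ h, 0 ≤ k h) ∧ (∀ h, k h = k (-h)) ∧
  ((∫⁻ h in ({0}ᶜ : Set (EuclideanSpace ℝ (Fin d))),
      ENNReal.ofReal (min 1 (‖h‖ ^ 2) * k h)) ≤ ENNReal.ofReal K₀) ∧
  (∀ h : EuclideanSpace ℝ (Fin d), 0 < ‖h‖ → ‖h‖ ≤ 1 →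
    κ⁻¹ * (ℓ ‖h‖ / ‖h‖ ^ d) ≤ k h ∧ k h ≤ κ * (ℓ ‖h‖ / ‖h‖ ^ d))

/-- the characteristic exponent `ψ(ξ) = ∫ (1 - cos⟨ξ,h⟩) k(h) dh`. -/
def psiFun (d : ℕ) (k : EuclideanSpace ℝ (Fin d) → ℝ)
    (ξ : EuclideanSpace ℝ (Fin d)) : ℝ :=
  ∫ h in ({0}ᶜ : Set (EuclideanSpace ℝ (Fin d))), (1 - Real.cos ⟪ξ, h⟫) * k h

/-!
In polar coordinates the exponent of `ℓ(|h|) |h|^{-d} dh` is the average over directions `θ` of the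
one-dimensional exponents, at `a = ⟪ξ, θ⟫`, of the radial measure `ν(ds) = ℓ(s)/s ds`, and
`L(r) = ν([r, 1))`. Put `r = |ξ|⁻¹`.

For the upper bound, `1 - cos (a s) ≤ a² s²` on `(0, r)` and `1 - cos (a s) ≤ 2` on `[r, 1)`; as the
index of `ℓ` exceeds `-2`, a Karamata estimate `∫_0^r s ℓ(s) ds ≲ r² L(r)` absorbs the first part.

For the lower bound, only directions with `⟪ξ, θ⟫ ≥ |ξ|/2` are needed. The integrand `1 - cos (a s)`
vanishes at some `s`, but its average over the dilates `x s`, `x ∈ [1, 8]`, is bounded below once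
`|a| s ≥ 1/2`. For small `s`, regular variation gives `ℓ(x s) ≳ ℓ(s)` for most of these `x`, and
each dilation leaves `ds/s` invariant.

The jumps of size at least `1` contribute at most `2 K₀`, which is controlled by `L` because
`L(|ξ|⁻¹)` is bounded below for `|ξ| ≥ R₀ > 1`.
-/

lemma le_mul_inv_mul_of_le {x y z : ℝ≥0∞} (hy₀ : y ≠ 0) (hy : y ≠ ∞) (hyz : y ≤ z) :
    x ≤ x * y⁻¹ * z :=
  calc x = x * y⁻¹ * y := by rw [mul_assoc, ENNReal.inv_mul_cancel hy₀ hy, mul_one]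
    _ ≤ x * y⁻¹ * z := by gcongr

lemma le_inv_one_sub_mul_of_le_mul_add {p x y : ℝ≥0∞} (hp : p < 1) (hx : x ≠ ∞)
    (h : x ≤ p * (x + y)) : x ≤ (1 - p)⁻¹ * (p * y) := by
  rw [← ENNReal.mul_le_iff_le_inv (tsub_pos_of_lt hp).ne' (by finiteness),
    ENNReal.sub_mul fun _ _ => hx, one_mul, tsub_le_iff_left, ← mul_add]
  exact h

lemma setLIntegral_Ioo_zero_comp_mul_left (f : ℝ → ℝ≥0∞) (b : ℝ) {x : ℝ} (hx : 0 < x) :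
    ∫⁻ s in Ioo 0 b, f s = ENNReal.ofReal x * ∫⁻ s in Ioo 0 (b / x), f (x * s) := by
  have hemb : MeasurableEmbedding (x * ·) := measurableEmbedding_mulLeft₀ hx.ne'
  conv_lhs => rw [← Real.smul_map_volume_mul_left hx.ne']
  rw [Measure.restrict_smul, lintegral_smul_measure, hemb.restrict_map, hemb.lintegral_map,
    preimage_const_mul_Ioo₀ _ _ hx, zero_div, abs_of_pos hx, smul_eq_mul]

section Cosine

lemma one_sub_cos_nonneg (x : ℝ) : 0 ≤ 1 - Real.cos x :=
  sub_nonneg.2 (Real.cos_le_one x)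

lemma ofReal_one_sub_cos_le_two (x : ℝ) : ENNReal.ofReal (1 - Real.cos x) ≤ 2 :=
  ENNReal.ofReal_le_ofNat.2 (by linarith [Real.neg_one_le_cos x])

lemma three_le_integral_one_sub_cos {b : ℝ} (hb : 1 / 2 ≤ |b|) :
    3 ≤ ∫ y in (1 : ℝ)..8, (1 - Real.cos (b * y)) := by
  have hb₀ : b ≠ 0 := abs_pos.1 (one_half_pos.trans_le hb)
  have hbound : |b⁻¹ * (Real.sin (b * 8) - Real.sin (b * 1))| ≤ 2 * 2 := by
    rw [abs_mul, abs_inv]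
    gcongr
    · rw [inv_le_comm₀ (abs_pos.2 hb₀) two_pos]
      linarith
    · exact (abs_sub _ _).trans
        (by linarith [Real.abs_sin_le_one (b * 8), Real.abs_sin_le_one (b * 1)])
  have hint : ∫ y in (1 : ℝ)..8, (1 - Real.cos (b * y)) =
      7 - b⁻¹ * (Real.sin (b * 8) - Real.sin (b * 1)) := by
    rw [intervalIntegral.integral_sub (by simp) (Continuous.intervalIntegrable (by fun_prop) _ _),
      intervalIntegral.integral_comp_mul_left _ hb₀, integral_cos, integral_one, smul_eq_mul]
    norm_num
  linarith [le_of_abs_le hbound]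

lemma one_le_lintegral_sdiff_one_sub_cos {b : ℝ} (hb : 1 / 2 ≤ |b|) {B : Set ℝ}
    (hB : MeasurableSet B) (hBvol : volume (Icc (1 : ℝ) 8 ∩ B) ≤ 1) :
    1 ≤ ∫⁻ y in Icc (1 : ℝ) 8 \ B, ENNReal.ofReal (1 - Real.cos (b * y)) := by
  have htotal : 2 + 1 ≤ ∫⁻ y in Icc (1 : ℝ) 8, ENNReal.ofReal (1 - Real.cos (b * y)) := by
    rw [← ofReal_integral_eq_lintegral_ofReal (Continuous.integrableOn_Icc (by fun_prop))
      (.of_forall fun y => one_sub_cos_nonneg _), integral_Icc_eq_integral_Ioc,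
      ← intervalIntegral.integral_of_le (by norm_num), two_add_one_eq_three]
    exact ENNReal.ofNat_le_ofReal.2 (three_le_integral_one_sub_cos hb)
  have hbad : ∫⁻ y in Icc (1 : ℝ) 8 ∩ B, ENNReal.ofReal (1 - Real.cos (b * y)) ≤ 2 :=
    calc ∫⁻ y in Icc (1 : ℝ) 8 ∩ B, ENNReal.ofReal (1 - Real.cos (b * y))
        ≤ ∫⁻ _ in Icc (1 : ℝ) 8 ∩ B, 2 := lintegral_mono fun y => ofReal_one_sub_cos_le_two _
      _ = 2 * volume (Icc (1 : ℝ) 8 ∩ B) := setLIntegral_const _ _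
      _ ≤ 2 := mul_le_of_le_one_right' hBvol
  rw [← lintegral_inter_add_sdiff _ _ hB] at htotal
  exact (ENNReal.add_le_add_iff_left (by finiteness)).1 (htotal.trans (by gcongr))

lemma ofReal_le_lintegral_one_sub_cos_mul {b m : ℝ} (hb : 1 / 2 ≤ |b|) {g : ℝ → ℝ}
    (hg : Measurable g) (hgm : volume (Icc (1 : ℝ) 8 ∩ {x | g x < m}) ≤ 1) :
    ENNReal.ofReal m ≤
      ∫⁻ x in Icc (1 : ℝ) 8, ENNReal.ofReal (g x) * ENNReal.ofReal (1 - Real.cos (b * x)) := by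
  have hB : MeasurableSet {x | g x < m} := measurableSet_lt hg measurable_const
  calc ENNReal.ofReal m
      ≤ ENNReal.ofReal m * ∫⁻ x in Icc (1 : ℝ) 8 \ {x | g x < m},
          ENNReal.ofReal (1 - Real.cos (b * x)) :=
        le_mul_of_one_le_right' (one_le_lintegral_sdiff_one_sub_cos hb hB hgm)
    _ = ∫⁻ x in Icc (1 : ℝ) 8 \ {x | g x < m},
          ENNReal.ofReal m * ENNReal.ofReal (1 - Real.cos (b * x)) :=
        (lintegral_const_mul' _ _ ENNReal.ofReal_ne_top).symm
    _ ≤ ∫⁻ x in Icc (1 : ℝ) 8 \ {x | g x < m},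
          ENNReal.ofReal (g x) * ENNReal.ofReal (1 - Real.cos (b * x)) := by
        refine setLIntegral_mono' (measurableSet_Icc.diff hB) fun x hx => ?_
        gcongr
        exact not_lt.1 hx.2
    _ ≤ _ := lintegral_mono_set sdiff_subset

end Cosine

section RegularVariation

variable {ℓ : ℝ → ℝ} {ρ : ℝ}

lemma RegVaryAt0.eventually_comp_mul_le (hℓ : RegVaryAt0 ℓ ρ)
    (hpos : ∀ s : ℝ, 0 < s → s < 1 → 0 < ℓ s) {x q : ℝ} (hx : 0 < x) (hq : x ^ ρ < q) :
    ∀ᶠ s in 𝓝[>] (0 : ℝ), ℓ (x * s) ≤ q * ℓ s := by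
  filter_upwards [(hℓ x hx).eventually_lt_const hq, Ioo_mem_nhdsGT one_pos] with s hs hs01
  exact ((div_lt_iff₀ (hpos s hs01.1 hs01.2)).1 hs).le

lemma RegVaryAt0.eventually_mul_le_comp (hℓ : RegVaryAt0 ℓ ρ)
    (hpos : ∀ s : ℝ, 0 < s → s < 1 → 0 < ℓ s) {x c : ℝ} (hx : 0 < x) (hc : c < x ^ ρ) :
    ∀ᶠ s in 𝓝[>] (0 : ℝ), c * ℓ s ≤ ℓ (x * s) := by
  filter_upwards [(hℓ x hx).eventually_const_lt hc, Ioo_mem_nhdsGT one_pos] with s hs hs01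
  exact ((lt_div_iff₀ (hpos s hs01.1 hs01.2)).1 hs).le

-- Convergence in measure on compact ratio intervals takes the place of the uniform convergence
-- theorem for regularly varying functions.
lemma RegVaryAt0.tendsto_volume_comp_mul_lt (hℓ : RegVaryAt0 ℓ ρ) (hmeas : Measurable ℓ)
    (hpos : ∀ s : ℝ, 0 < s → s < 1 → 0 < ℓ s) {a b c : ℝ} (ha : 0 < a)
    (hc : ∀ x ∈ Icc a b, c < x ^ ρ) :
    Tendsto (fun s => volume (Icc a b ∩ {x | ℓ (x * s) < c * ℓ s})) (𝓝[>] 0) (𝓝 0) := by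
  rw [← measure_empty (μ := (volume : Measure ℝ))]
  refine tendsto_measure_of_ae_tendsto_indicator _ .empty
    (fun s => measurableSet_Icc.inter (measurableSet_lt (by fun_prop) (by fun_prop)))
    measurableSet_Icc measure_Icc_lt_top.ne (.of_forall fun s => inter_subset_left)
    (.of_forall fun x => ?_)
  by_cases hx : x ∈ Icc a b
  · filter_upwards [hℓ.eventually_mul_le_comp hpos (ha.trans_le hx.1) (hc x hx)] with s hs
    exact iff_of_false (fun h => hs.not_gt h.2) (notMem_empty x)
  · exact .of_forall fun s => iff_of_false (fun h => hx h.1) (notMem_empty x)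

lemma RegVaryAt0.exists_volume_comp_mul_lt_le_one (hℓ : RegVaryAt0 ℓ ρ) (hmeas : Measurable ℓ)
    (hpos : ∀ s : ℝ, 0 < s → s < 1 → 0 < ℓ s) :
    ∃ c > 0, ∀ᶠ s in 𝓝[>] (0 : ℝ),
      volume (Icc (1 : ℝ) 8 ∩ {x | ℓ (x * s) < c * ℓ s}) ≤ 1 := by
  have hmin : 0 < min 1 ((8 : ℝ) ^ ρ) := by positivity
  have hle : ∀ x ∈ Icc (1 : ℝ) 8, min 1 ((8 : ℝ) ^ ρ) ≤ x ^ ρ := fun x hx => by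
    rcases le_total 0 ρ with hρ | hρ
    · exact min_le_of_left_le (Real.one_le_rpow hx.1 hρ)
    · exact min_le_of_right_le (Real.rpow_le_rpow_of_nonpos (one_pos.trans_le hx.1) hx.2 hρ)
  exact ⟨_, half_pos hmin, (hℓ.tendsto_volume_comp_mul_lt hmeas hpos one_pos fun x hx =>
    (half_lt_self hmin).trans_le (hle x hx)).eventually_le_const one_pos⟩

end RegularVariation

section LevyExponent

/-- The extended real-valued characteristic exponent `∫ (1 - cos ⟪ξ, h⟫) ν(dh)` of the symmetric
Lévy process with Lévy measure `ν`. On `E = ℝ` the inner product is the multiplication. -/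
def levyExponent {E : Type*} [NormedAddCommGroup E] [InnerProductSpace ℝ E] [MeasurableSpace E]
    (ν : Measure E) (ξ : E) : ℝ≥0∞ :=
  ∫⁻ h, ENNReal.ofReal (1 - Real.cos ⟪ξ, h⟫) ∂ν

/-- The second moment `∫ s² ν(ds)`, possibly infinite. -/
def secondMoment (ν : Measure ℝ) : ℝ≥0∞ := ∫⁻ s, ENNReal.ofReal (s ^ 2) ∂ν

variable {E : Type*} [NormedAddCommGroup E] [InnerProductSpace ℝ E] [MeasurableSpace E]

lemma levyExponent_mono {ν₁ ν₂ : Measure E} (hν : ν₁ ≤ ν₂) (ξ : E) :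
    levyExponent ν₁ ξ ≤ levyExponent ν₂ ξ :=
  lintegral_mono' hν le_rfl

lemma levyExponent_add (ν₁ ν₂ : Measure E) (ξ : E) :
    levyExponent (ν₁ + ν₂) ξ = levyExponent ν₁ ξ + levyExponent ν₂ ξ :=
  lintegral_add_measure _ _ _

lemma levyExponent_smul (c : ℝ≥0∞) (ν : Measure E) (ξ : E) :
    levyExponent (c • ν) ξ = c * levyExponent ν ξ :=
  lintegral_smul_measure _ _

lemma levyExponent_le_two_mul_measure_univ (ν : Measure E) (ξ : E) :
    levyExponent ν ξ ≤ 2 * ν univ :=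
  (lintegral_mono fun _ => ofReal_one_sub_cos_le_two _).trans_eq (lintegral_const _)

lemma levyExponent_eq_lintegral_mul (ν : Measure ℝ) (a : ℝ) :
    levyExponent ν a = ∫⁻ s, ENNReal.ofReal (1 - Real.cos (a * s)) ∂ν := by
  simp only [levyExponent, RCLike.inner_apply, conj_trivial, mul_comm]

lemma levyExponent_le_sq_mul_secondMoment (ν : Measure ℝ) (a : ℝ) :
    levyExponent ν a ≤ ENNReal.ofReal (a ^ 2) * secondMoment ν := by
  rw [levyExponent_eq_lintegral_mul, secondMoment, ← lintegral_const_mul _ (by fun_prop)]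
  refine lintegral_mono fun s => ?_
  rw [← ENNReal.ofReal_mul (sq_nonneg a), ← mul_pow]
  exact ENNReal.ofReal_le_ofReal
    (by linarith [Real.one_sub_sq_div_two_le_cos (x := a * s), sq_nonneg (a * s)])

lemma levyExponent_le_add_measure_Ici (ν : Measure ℝ) (a r : ℝ) :
    levyExponent ν a ≤
      ENNReal.ofReal (a ^ 2) * secondMoment (ν.restrict (Iio r)) + 2 * ν (Ici r) := by
  conv_lhs => rw [← Measure.restrict_add_restrict_compl (μ := ν) (measurableSet_Iio (a := r)),
    compl_Iio, levyExponent_add]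
  gcongr
  · exact levyExponent_le_sq_mul_secondMoment _ _
  · simpa only [Measure.restrict_apply_univ] using
      levyExponent_le_two_mul_measure_univ (ν.restrict (Ici r)) a

lemma ofReal_sq_mul_measure_Ici_le_secondMoment (ν : Measure ℝ) {r : ℝ} (hr : 0 ≤ r) :
    ENNReal.ofReal (r ^ 2) * ν (Ici r) ≤ secondMoment ν :=
  calc ENNReal.ofReal (r ^ 2) * ν (Ici r)
      ≤ ENNReal.ofReal (r ^ 2) * ν {s | ENNReal.ofReal (r ^ 2) ≤ ENNReal.ofReal (s ^ 2)} := by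
        gcongr
        exact fun s hs => ENNReal.ofReal_le_ofReal (pow_le_pow_left₀ hr hs 2)
    _ ≤ secondMoment ν := mul_meas_ge_le_lintegral (by fun_prop) _

lemma measure_Ici_ne_top_of_secondMoment_ne_top {ν : Measure ℝ} (hν : secondMoment ν ≠ ∞) {r : ℝ}
    (hr : 0 < r) : ν (Ici r) ≠ ∞ := fun h =>
  hν <| top_le_iff.1 <| by
    simpa [h, ENNReal.mul_top, hr.ne'] using ofReal_sq_mul_measure_Ici_le_secondMoment ν hr.le

lemma secondMoment_mono {ν₁ ν₂ : Measure ℝ} (hν : ν₁ ≤ ν₂) : secondMoment ν₁ ≤ secondMoment ν₂ :=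
  lintegral_mono' hν le_rfl

lemma secondMoment_restrict_Iio_le_add (ν : Measure ℝ) {r : ℝ} (hr : 0 ≤ r) (t : ℝ) :
    secondMoment (ν.restrict (Iio t)) ≤
      secondMoment (ν.restrict (Iio r)) + ENNReal.ofReal (t ^ 2) * ν (Ici r) :=
  calc secondMoment (ν.restrict (Iio t))
      ≤ ∫⁻ s in Iio r ∪ Ico r t, ENNReal.ofReal (s ^ 2) ∂ν :=
        lintegral_mono_set Iio_subset_Iio_union_Ico
    _ ≤ secondMoment (ν.restrict (Iio r)) + ∫⁻ s in Ico r t, ENNReal.ofReal (s ^ 2) ∂ν :=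
        lintegral_union_le _ _ _
    _ ≤ secondMoment (ν.restrict (Iio r)) + ∫⁻ _ in Ico r t, ENNReal.ofReal (t ^ 2) ∂ν := by
        gcongr _ + ?_
        refine setLIntegral_mono' measurableSet_Ico fun s hs => ENNReal.ofReal_le_ofReal ?_
        exact pow_le_pow_left₀ (hr.trans hs.1) hs.2.le 2
    _ ≤ secondMoment (ν.restrict (Iio r)) + ENNReal.ofReal (t ^ 2) * ν (Ici r) := by
        rw [setLIntegral_const]
        gcongr
        exact Ico_subset_Ici_self

lemma ofReal_mul_measure_Ico_le_levyExponent (ν : Measure ℝ) {a u v δ : ℝ} (hδ : 0 ≤ δ)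
    (hu : δ ≤ |a| * u) (hv : |a| * v ≤ Real.pi) :
    ENNReal.ofReal (2 / Real.pi ^ 2 * δ ^ 2) * ν (Ico u v) ≤ levyExponent ν a :=
  calc ENNReal.ofReal (2 / Real.pi ^ 2 * δ ^ 2) * ν (Ico u v)
      = ∫⁻ _ in Ico u v, ENNReal.ofReal (2 / Real.pi ^ 2 * δ ^ 2) ∂ν := by rw [setLIntegral_const]
    _ ≤ ∫⁻ s in Ico u v, ENNReal.ofReal (1 - Real.cos (a * s)) ∂ν := by
        refine setLIntegral_mono' measurableSet_Ico fun s hs => ENNReal.ofReal_le_ofReal ?_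
        have hδs : δ ≤ |a| * s := hu.trans (by gcongr; exact hs.1)
        have hsπ : |a| * s ≤ Real.pi := le_trans (by gcongr; exact hs.2.le) hv
        have hcos := Real.cos_le_one_sub_mul_cos_sq
          ((abs_of_nonneg (hδ.trans hδs)).trans_le hsπ)
        have hcos_abs : Real.cos (a * s) = Real.cos (|a| * s) := by
          rcases abs_choice a with h | h <;> simp [h]
        have hsq : 2 / Real.pi ^ 2 * δ ^ 2 ≤ 2 / Real.pi ^ 2 * (|a| * s) ^ 2 := by gcongr
        linarith
    _ ≤ levyExponent ν a := by
        rw [levyExponent_eq_lintegral_mul]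
        exact setLIntegral_le_lintegral _ _

end LevyExponent

section RadialMeasure

/-- The measure `ℓ(s)/s ds` on `(0, 1)`, the radial part of the Lévy measure
`ℓ(|h|) |h|^{-d} dh` on the unit ball of a `d`-dimensional space. -/
def radialMeasure (ℓ : ℝ → ℝ) : Measure ℝ :=
  (volume.restrict (Ioo 0 1)).withDensity fun s => ENNReal.ofReal (ℓ s / s)

variable {ℓ : ℝ → ℝ} {ρ : ℝ}

lemma setLIntegral_radialMeasure (hmeas : Measurable ℓ) {f : ℝ → ℝ≥0∞} (hf : Measurable f)
    {A : Set ℝ} (hA : MeasurableSet A) :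
    ∫⁻ s in A, f s ∂radialMeasure ℓ = ∫⁻ s in A ∩ Ioo 0 1, ENNReal.ofReal (ℓ s / s) * f s := by
  rw [radialMeasure, restrict_withDensity hA, Measure.restrict_restrict hA,
    lintegral_withDensity_eq_lintegral_mul _ (by fun_prop) hf]
  rfl

lemma lintegral_radialMeasure (hmeas : Measurable ℓ) {f : ℝ → ℝ≥0∞} (hf : Measurable f) :
    ∫⁻ s, f s ∂radialMeasure ℓ = ∫⁻ s in Ioo 0 1, ENNReal.ofReal (ℓ s / s) * f s := by
  rw [← setLIntegral_univ, setLIntegral_radialMeasure hmeas hf .univ, univ_inter]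

lemma radialMeasure_apply {A : Set ℝ} (hA : MeasurableSet A) :
    radialMeasure ℓ A = ∫⁻ s in A ∩ Ioo 0 1, ENNReal.ofReal (ℓ s / s) := by
  rw [radialMeasure, withDensity_apply _ hA, Measure.restrict_restrict hA]

lemma radialMeasure_Ico_ne_zero (hmeas : Measurable ℓ)
    (hpos : ∀ s : ℝ, 0 < s → s < 1 → 0 < ℓ s) {a b : ℝ} (ha : 0 ≤ a) (ha₁ : a < 1) (hab : a < b) :
    radialMeasure ℓ (Ico a b) ≠ 0 := by
  have hsub : Ioo a (min b 1) ⊆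
      (Function.support fun s => ENNReal.ofReal (ℓ s / s)) ∩ (Ico a b ∩ Ioo 0 1) := fun s hs => by
    have hs₀ : 0 < s := ha.trans_lt hs.1
    have hs₁ : s < 1 := hs.2.trans_le (min_le_right _ _)
    exact ⟨(ENNReal.ofReal_pos.2 (div_pos (hpos s hs₀ hs₁) hs₀)).ne',
      ⟨hs.1.le, hs.2.trans_le (min_le_left _ _)⟩, hs₀, hs₁⟩
  rw [radialMeasure_apply measurableSet_Ico, ← pos_iff_ne_zero,
    setLIntegral_pos_iff (by fun_prop)]
  exact ((Measure.measure_Ioo_pos volume).2 (lt_min hab ha₁)).trans_le (measure_mono hsub)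

lemma radialMeasure_Ici_ne_zero (hmeas : Measurable ℓ)
    (hpos : ∀ s : ℝ, 0 < s → s < 1 → 0 < ℓ s) {a : ℝ} (ha : 0 ≤ a) (ha₁ : a < 1) :
    radialMeasure ℓ (Ici a) ≠ 0 := fun h =>
  radialMeasure_Ico_ne_zero hmeas hpos ha ha₁ ha₁ (measure_mono_null Ico_subset_Ici_self h)

lemma toReal_radialMeasure_Ici (hmeas : Measurable ℓ) (hpos : ∀ s : ℝ, 0 < s → s < 1 → 0 < ℓ s)
    {r : ℝ} (hr : 0 < r) (hr₁ : r ≤ 1) : (radialMeasure ℓ (Ici r)).toReal = Lfun ℓ r := by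
  have hset : Ici r ∩ Ioo 0 1 = Ico r 1 := by
    ext s
    simp only [mem_inter_iff, mem_Ici, mem_Ioo, mem_Ico]
    exact ⟨fun h => ⟨h.1, h.2.2⟩, fun h => ⟨h.1, hr.trans_le h.1, h.2⟩⟩
  rw [radialMeasure_apply measurableSet_Ici, hset, Lfun, intervalIntegral.integral_of_le hr₁,
    ← integral_Ico_eq_integral_Ioc, integral_eq_lintegral_of_nonneg_ae]
  · refine (ae_restrict_iff' measurableSet_Ico).2 (.of_forall fun s hs => ?_)
    have hs₀ : 0 < s := hr.trans_le hs.1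
    exact (div_pos (hpos s hs₀ hs.2) hs₀).le
  · exact (by fun_prop : Measurable fun s => ℓ s / s).aestronglyMeasurable

lemma secondMoment_radialMeasure_restrict_Iio (hmeas : Measurable ℓ) {r : ℝ} (hr : r ≤ 1) :
    secondMoment ((radialMeasure ℓ).restrict (Iio r)) =
      ∫⁻ s in Ioo 0 r, ENNReal.ofReal (s * ℓ s) := by
  have hset : Iio r ∩ Ioo 0 1 = Ioo 0 r := by
    rw [inter_comm, Ioo_inter_Iio, min_eq_right hr]
  rw [secondMoment, setLIntegral_radialMeasure hmeas (by fun_prop) measurableSet_Iio, hset]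
  refine setLIntegral_congr_fun measurableSet_Ioo fun s hs => ?_
  have hs₀ := hs.1
  rw [← ENNReal.ofReal_mul' (sq_nonneg s)]
  congr 1
  field_simp

lemma RegVaryAt0.exists_secondMoment_restrict_Iio_le_mul (hℓ : RegVaryAt0 ℓ ρ) (hρ : -2 < ρ)
    (hmeas : Measurable ℓ) (hpos : ∀ s : ℝ, 0 < s → s < 1 → 0 < ℓ s) :
    ∃ p < 1, ∀ᶠ r in 𝓝[>] (0 : ℝ), secondMoment ((radialMeasure ℓ).restrict (Iio r)) ≤
      p * secondMoment ((radialMeasure ℓ).restrict (Iio (2 * r))) := by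
  have hhalf : (1 / 2 : ℝ) ^ ρ < 4 :=
    calc (1 / 2 : ℝ) ^ ρ < (1 / 2 : ℝ) ^ (-2 : ℝ) :=
          Real.rpow_lt_rpow_of_exponent_gt (by norm_num) (by norm_num) hρ
      _ = 4 := by rw [Real.rpow_neg (by norm_num)]; norm_num
  obtain ⟨q, hq, hq4⟩ := exists_between hhalf
  have hq₀ : 0 ≤ q := le_trans (by positivity) hq.le
  obtain ⟨u, hu, hsub⟩ := mem_nhdsGT_iff_exists_Ioo_subset.1
    (hℓ.eventually_comp_mul_le hpos one_half_pos hq)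
  refine ⟨ENNReal.ofReal (q / 4), ENNReal.ofReal_lt_one.2 (by linarith), ?_⟩
  filter_upwards [Ioo_mem_nhdsGT (show 0 < min u 1 / 2 from half_pos (lt_min hu one_pos))]
    with r hr
  have hr_u : 2 * r ≤ u := by linarith [hr.2, min_le_left u 1]
  have hr_one : 2 * r ≤ 1 := by linarith [hr.2, min_le_right u 1]
  rw [secondMoment_radialMeasure_restrict_Iio hmeas hr_one,
    secondMoment_radialMeasure_restrict_Iio hmeas (by linarith [hr.1]),
    setLIntegral_Ioo_zero_comp_mul_left _ _ one_half_pos, div_div_eq_mul_div, div_one, mul_comm r,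
    ← lintegral_const_mul _ (by fun_prop), ← lintegral_const_mul _ (by fun_prop)]
  refine setLIntegral_mono' measurableSet_Ioo fun s hs => ?_
  have hs_le : ℓ (1 / 2 * s) ≤ q * ℓ s := hsub ⟨hs.1, hs.2.trans_le hr_u⟩
  have hs₀ := hs.1.le
  rw [← ENNReal.ofReal_mul (by norm_num), ← ENNReal.ofReal_mul (by positivity)]
  refine ENNReal.ofReal_le_ofReal ?_
  calc 1 / 2 * (1 / 2 * s * ℓ (1 / 2 * s)) ≤ 1 / 2 * (1 / 2 * s * (q * ℓ s)) := by gcongr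
    _ = q / 4 * (s * ℓ s) := by ring

-- A one-sided Karamata theorem: the doubling estimate closes on itself because `p < 1`.
lemma RegVaryAt0.exists_secondMoment_restrict_Iio_le (hℓ : RegVaryAt0 ℓ ρ) (hρ : -2 < ρ)
    (hmeas : Measurable ℓ) (hpos : ∀ s : ℝ, 0 < s → s < 1 → 0 < ℓ s)
    (hfin : secondMoment (radialMeasure ℓ) ≠ ∞) {r₀ : ℝ} (hr₀ : 0 < r₀) (hr₀₁ : r₀ < 1) :
    ∃ C ≠ ∞, ∀ r, 0 < r → r ≤ r₀ → secondMoment ((radialMeasure ℓ).restrict (Iio r)) ≤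
      C * (ENNReal.ofReal (r ^ 2) * radialMeasure ℓ (Ici r)) := by
  obtain ⟨p, hp, hev⟩ := hℓ.exists_secondMoment_restrict_Iio_le_mul hρ hmeas hpos
  obtain ⟨u, hu, hsub⟩ := mem_nhdsGT_iff_exists_Ioo_subset.1 hev
  set ν := radialMeasure ℓ
  have hle_fin : ∀ r, secondMoment (ν.restrict (Iio r)) ≤ secondMoment ν := fun r =>
    secondMoment_mono Measure.restrict_le_self
  have hsmall : ∀ r ∈ Ioo 0 u, secondMoment (ν.restrict (Iio r)) ≤
      (1 - p)⁻¹ * (p * 4) * (ENNReal.ofReal (r ^ 2) * ν (Ici r)) := fun r hr => by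
    have hdouble : ENNReal.ofReal ((2 * r) ^ 2) = 4 * ENNReal.ofReal (r ^ 2) := by
      rw [mul_pow, ENNReal.ofReal_mul (by norm_num)]
      norm_num
    have hself : secondMoment (ν.restrict (Iio r)) ≤ p * (secondMoment (ν.restrict (Iio r)) +
        ENNReal.ofReal ((2 * r) ^ 2) * ν (Ici r)) :=
      (hsub hr).trans (by gcongr; exact secondMoment_restrict_Iio_le_add ν hr.1.le _)
    refine (le_inv_one_sub_mul_of_le_mul_add hp (ne_top_of_le_ne_top hfin (hle_fin r))
      hself).trans_eq ?_
    rw [hdouble]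
    ring
  have hu_ne_zero : ENNReal.ofReal (u ^ 2) * ν (Ici r₀) ≠ 0 := mul_ne_zero
    (ENNReal.ofReal_pos.2 (pow_pos hu 2)).ne' (radialMeasure_Ici_ne_zero hmeas hpos hr₀.le hr₀₁)
  have hu_ne_top : ENNReal.ofReal (u ^ 2) * ν (Ici r₀) ≠ ∞ := ENNReal.mul_ne_top
    ENNReal.ofReal_ne_top (measure_Ici_ne_top_of_secondMoment_ne_top hfin hr₀)
  refine ⟨max ((1 - p)⁻¹ * (p * 4))
    (secondMoment ν * (ENNReal.ofReal (u ^ 2) * ν (Ici r₀))⁻¹), ?_, fun r hr hr_le => ?_⟩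
  · have := (tsub_pos_of_lt hp).ne'
    finiteness
  rcases lt_or_ge r u with hru | hur
  · exact (hsmall r ⟨hr, hru⟩).trans (by gcongr; exact le_max_left _ _)
  · have hy : ENNReal.ofReal (u ^ 2) * ν (Ici r₀) ≤ ENNReal.ofReal (r ^ 2) * ν (Ici r) := by
      have hu₀ : 0 ≤ u := (mem_Ioi.1 hu).le
      gcongr
    calc secondMoment (ν.restrict (Iio r)) ≤ secondMoment ν := hle_fin r
      _ ≤ _ := le_mul_inv_mul_of_le hu_ne_zero hu_ne_top hy
      _ ≤ _ := by gcongr; exact le_max_right _ _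

lemma RegVaryAt0.exists_levyExponent_le (hℓ : RegVaryAt0 ℓ ρ) (hρ : -2 < ρ)
    (hmeas : Measurable ℓ) (hpos : ∀ s : ℝ, 0 < s → s < 1 → 0 < ℓ s)
    (hfin : secondMoment (radialMeasure ℓ) ≠ ∞) {r₀ : ℝ} (hr₀ : 0 < r₀) (hr₀₁ : r₀ < 1) :
    ∃ C ≠ ∞, ∀ a r : ℝ, 0 < r → r ≤ r₀ → |a| * r ≤ 1 →
      levyExponent (radialMeasure ℓ) a ≤ C * radialMeasure ℓ (Ici r) := by
  obtain ⟨C, hC, hle⟩ :=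
    hℓ.exists_secondMoment_restrict_Iio_le hρ hmeas hpos hfin hr₀ hr₀₁
  refine ⟨C + 2, by finiteness, fun a r hr hr_le har => ?_⟩
  have hsq : ENNReal.ofReal (a ^ 2) * ENNReal.ofReal (r ^ 2) ≤ 1 := by
    rw [← ENNReal.ofReal_mul (sq_nonneg a), ← mul_pow, ← sq_abs, abs_mul, abs_of_pos hr]
    exact ENNReal.ofReal_le_one.2 (pow_le_one₀ (by positivity) har)
  calc levyExponent (radialMeasure ℓ) a
      ≤ ENNReal.ofReal (a ^ 2) * secondMoment ((radialMeasure ℓ).restrict (Iio r)) +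
          2 * radialMeasure ℓ (Ici r) := levyExponent_le_add_measure_Ici _ _ _
    _ ≤ ENNReal.ofReal (a ^ 2) * (C * (ENNReal.ofReal (r ^ 2) * radialMeasure ℓ (Ici r))) +
          2 * radialMeasure ℓ (Ici r) := by gcongr; exact hle r hr hr_le
    _ = ENNReal.ofReal (a ^ 2) * ENNReal.ofReal (r ^ 2) * (C * radialMeasure ℓ (Ici r)) +
          2 * radialMeasure ℓ (Ici r) := by ring
    _ ≤ 1 * (C * radialMeasure ℓ (Ici r)) + 2 * radialMeasure ℓ (Ici r) := by gcongr
    _ = (C + 2) * radialMeasure ℓ (Ici r) := by ring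

lemma setLIntegral_comp_mul_le_levyExponent (hmeas : Measurable ℓ) (a : ℝ) {x b : ℝ} (hx : 0 < x)
    (hxb : x * b ≤ 1) :
    ∫⁻ s in Ioo 0 b, ENNReal.ofReal (ℓ (x * s) / s) * ENNReal.ofReal (1 - Real.cos (a * s * x)) ≤
      levyExponent (radialMeasure ℓ) a := by
  have hscale : levyExponent (radialMeasure ℓ) a = ∫⁻ s in Ioo 0 (1 / x),
      ENNReal.ofReal (ℓ (x * s) / s) * ENNReal.ofReal (1 - Real.cos (a * s * x)) := by
    rw [levyExponent_eq_lintegral_mul, lintegral_radialMeasure hmeas (by fun_prop),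
      setLIntegral_Ioo_zero_comp_mul_left _ _ hx, ← lintegral_const_mul _ (by fun_prop)]
    refine lintegral_congr fun s => ?_
    rw [← mul_assoc, ← ENNReal.ofReal_mul hx.le, ← mul_div_assoc, mul_div_mul_left _ _ hx.ne',
      mul_comm x s, mul_assoc a]
  rw [hscale]
  exact lintegral_mono_set (Ioo_subset_Ioo_right ((le_div_iff₀' hx).2 hxb))

lemma lintegral_setLIntegral_comp_mul_le_levyExponent (hmeas : Measurable ℓ) (a : ℝ) :
    ∫⁻ s in Ioo 0 (1 / 8), ∫⁻ x in Icc (1 : ℝ) 8,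
        ENNReal.ofReal (ℓ (x * s) / s) * ENNReal.ofReal (1 - Real.cos (a * s * x)) ≤
      7 * levyExponent (radialMeasure ℓ) a := by
  rw [lintegral_lintegral_swap (by fun_prop)]
  calc ∫⁻ x in Icc (1 : ℝ) 8, ∫⁻ s in Ioo 0 (1 / 8),
        ENNReal.ofReal (ℓ (x * s) / s) * ENNReal.ofReal (1 - Real.cos (a * s * x))
      ≤ ∫⁻ _ in Icc (1 : ℝ) 8, levyExponent (radialMeasure ℓ) a :=
        setLIntegral_mono' measurableSet_Icc fun x hx =>
          setLIntegral_comp_mul_le_levyExponent hmeas a (one_pos.trans_le hx.1)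
            (by linarith [hx.2])
    _ = 7 * levyExponent (radialMeasure ℓ) a := by
        rw [setLIntegral_const, Real.volume_Icc, mul_comm]
        norm_num

lemma RegVaryAt0.exists_measure_Ico_le_levyExponent (hℓ : RegVaryAt0 ℓ ρ) (hmeas : Measurable ℓ)
    (hpos : ∀ s : ℝ, 0 < s → s < 1 → 0 < ℓ s) :
    ∃ C ≠ ∞, ∃ s₁ ∈ Ioo (0 : ℝ) 1, ∀ a r : ℝ, 0 < r → 1 / 2 ≤ |a| * r →
      radialMeasure ℓ (Ico r s₁) ≤ C * levyExponent (radialMeasure ℓ) a := by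
  obtain ⟨c, hc, hev⟩ := hℓ.exists_volume_comp_mul_lt_le_one hmeas hpos
  obtain ⟨u, hu, hsub⟩ := mem_nhdsGT_iff_exists_Ioo_subset.1 hev
  have hc_ne : ENNReal.ofReal c ≠ 0 := (ENNReal.ofReal_pos.2 hc).ne'
  refine ⟨(ENNReal.ofReal c)⁻¹ * 7, by finiteness, min u (1 / 8),
    ⟨lt_min hu (by norm_num), (min_le_right _ _).trans_lt (by norm_num)⟩, fun a r hr har => ?_⟩
  have hset : Ico r (min u (1 / 8)) ⊆ Ioo 0 u ∩ Ioo 0 (1 / 8) := fun s hs =>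
    ⟨⟨hr.trans_le hs.1, hs.2.trans_le (min_le_left _ _)⟩,
      ⟨hr.trans_le hs.1, hs.2.trans_le (min_le_right _ _)⟩⟩
  have hpoint : ∀ s ∈ Ico r (min u (1 / 8)), ENNReal.ofReal c * ENNReal.ofReal (ℓ s / s) ≤
      ∫⁻ x in Icc (1 : ℝ) 8,
        ENNReal.ofReal (ℓ (x * s) / s) * ENNReal.ofReal (1 - Real.cos (a * s * x)) := fun s hs => by
    have hs₀ : 0 < s := hr.trans_le hs.1
    have has : 1 / 2 ≤ |a * s| := by
      rw [abs_mul, abs_of_pos hs₀]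
      exact har.trans (by gcongr; exact hs.1)
    rw [← ENNReal.ofReal_mul hc.le, ← mul_div_assoc]
    refine ofReal_le_lintegral_one_sub_cos_mul has (by fun_prop) ?_
    simp only [div_lt_div_iff_of_pos_right hs₀]
    exact hsub (hset hs).1
  rw [mul_assoc, ← ENNReal.mul_le_iff_le_inv hc_ne ENNReal.ofReal_ne_top]
  calc ENNReal.ofReal c * radialMeasure ℓ (Ico r (min u (1 / 8)))
      ≤ ENNReal.ofReal c * ∫⁻ s in Ico r (min u (1 / 8)), ENNReal.ofReal (ℓ s / s) := by
        rw [radialMeasure_apply measurableSet_Ico]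
        gcongr
        exact inter_subset_left
    _ = ∫⁻ s in Ico r (min u (1 / 8)), ENNReal.ofReal c * ENNReal.ofReal (ℓ s / s) :=
        (lintegral_const_mul _ (by fun_prop)).symm
    _ ≤ ∫⁻ s in Ico r (min u (1 / 8)), ∫⁻ x in Icc (1 : ℝ) 8,
          ENNReal.ofReal (ℓ (x * s) / s) * ENNReal.ofReal (1 - Real.cos (a * s * x)) :=
        setLIntegral_mono' measurableSet_Ico hpoint
    _ ≤ _ := lintegral_mono_set fun s hs => (hset hs).2
    _ ≤ 7 * levyExponent (radialMeasure ℓ) a :=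
        lintegral_setLIntegral_comp_mul_le_levyExponent hmeas a

lemma RegVaryAt0.exists_measure_Ici_le_levyExponent (hℓ : RegVaryAt0 ℓ ρ) (hmeas : Measurable ℓ)
    (hpos : ∀ s : ℝ, 0 < s → s < 1 → 0 < ℓ s) (hfin : secondMoment (radialMeasure ℓ) ≠ ∞)
    {a₀ : ℝ} (ha₀ : 0 < a₀) :
    ∃ C ≠ ∞, ∀ a r : ℝ, a₀ ≤ |a| → 0 < r → 1 / 2 ≤ |a| * r →
      radialMeasure ℓ (Ici r) ≤ C * levyExponent (radialMeasure ℓ) a := by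
  obtain ⟨C, hC, s₁, ⟨hs₁, hs₁'⟩, hcore⟩ := hℓ.exists_measure_Ico_le_levyExponent hmeas hpos
  set ν := radialMeasure ℓ
  have hν_top : ∀ {r : ℝ}, 0 < r → ν (Ici r) ≠ ∞ := measure_Ici_ne_top_of_secondMoment_ne_top hfin
  set δ := a₀ * (s₁ / 2)
  have hδ : 0 < δ := by positivity
  have hquad_ne : ENNReal.ofReal (2 / Real.pi ^ 2 * δ ^ 2) ≠ 0 :=
    (ENNReal.ofReal_pos.2 (by positivity)).ne'
  have hmid : ∀ a : ℝ, a₀ ≤ |a| → ν (Ico (s₁ / 2) s₁) ≤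
      (C + (ENNReal.ofReal (2 / Real.pi ^ 2 * δ ^ 2))⁻¹) * levyExponent ν a := fun a ha => by
    rcases le_or_gt 1 (|a| * s₁) with h | h
    · exact (hcore a (s₁ / 2) (half_pos hs₁) (by linarith)).trans
        (by gcongr; exact le_self_add)
    · have hquad := ofReal_mul_measure_Ico_le_levyExponent ν (u := s₁ / 2) (v := s₁) hδ.le
        (mul_le_mul_of_nonneg_right ha (half_pos hs₁).le)
        (h.le.trans (by linarith [Real.pi_gt_three]))
      rw [ENNReal.mul_le_iff_le_inv hquad_ne ENNReal.ofReal_ne_top] at hquad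
      exact hquad.trans (by gcongr; exact le_add_self)
  have hmid_ne_zero : ν (Ico (s₁ / 2) s₁) ≠ 0 :=
    radialMeasure_Ico_ne_zero hmeas hpos (half_pos hs₁).le (by linarith) (half_lt_self hs₁)
  have hmid_ne_top : ν (Ico (s₁ / 2) s₁) ≠ ∞ :=
    measure_ne_top_of_subset Ico_subset_Ici_self (hν_top (half_pos hs₁))
  have hs₁_ne_top := hν_top hs₁
  refine ⟨C + ν (Ici s₁) * (ν (Ico (s₁ / 2) s₁))⁻¹ *
    (C + (ENNReal.ofReal (2 / Real.pi ^ 2 * δ ^ 2))⁻¹), by finiteness, fun a r ha hr har => ?_⟩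
  rw [add_mul, mul_assoc _ _ (levyExponent ν a)]
  calc ν (Ici r) ≤ ν (Ico r s₁ ∪ Ici s₁) := measure_mono Ici_subset_Ico_union_Ici
    _ ≤ ν (Ico r s₁) + ν (Ici s₁) := measure_union_le _ _
    _ ≤ _ := by
      gcongr
      · exact hcore a r hr har
      · exact (le_mul_inv_mul_of_le hmid_ne_zero hmid_ne_top (hmid a ha))

end RadialMeasure

lemma lintegral_eq_lintegral_toSphere {E : Type*} [NormedAddCommGroup E] [NormedSpace ℝ E]
    [FiniteDimensional ℝ E] [Nontrivial E] [MeasurableSpace E] [BorelSpace E] (μ : Measure E)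
    [μ.IsAddHaarMeasure] {f : E → ℝ≥0∞} (hf : Measurable f) :
    ∫⁻ h, f h ∂μ = ∫⁻ θ : sphere (0 : E) 1, (∫⁻ s in Ioi (0 : ℝ),
      ENNReal.ofReal (s ^ (Module.finrank ℝ E - 1)) * f (s • (θ : E))) ∂μ.toSphere := by
  have hg : Measurable fun p : sphere (0 : E) 1 × Ioi (0 : ℝ) => f ((p.2 : ℝ) • (p.1 : E)) := by
    fun_prop
  calc ∫⁻ h, f h ∂μ = ∫⁻ x : ({0}ᶜ : Set E), f x ∂μ.comap (↑) := by
        rw [lintegral_subtype_comap (measurableSet_singleton _).compl f, restrict_compl_singleton]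
    _ = ∫⁻ x : ({0}ᶜ : Set E), f (((homeomorphUnitSphereProd E x).2 : ℝ) •
          ((homeomorphUnitSphereProd E x).1 : E)) ∂μ.comap (↑) := by
        refine lintegral_congr fun x => ?_
        simp [smul_smul, mul_inv_cancel₀ (norm_ne_zero_iff.2 x.2)]
    _ = ∫⁻ p, f ((p.2 : ℝ) • (p.1 : E))
          ∂μ.toSphere.prod (.volumeIoiPow (Module.finrank ℝ E - 1)) :=
        μ.measurePreserving_homeomorphUnitSphereProd.lintegral_comp hg
    _ = _ := by
        rw [lintegral_prod _ hg.aemeasurable]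
        refine lintegral_congr fun θ => ?_
        rw [Measure.volumeIoiPow,
          lintegral_withDensity_eq_lintegral_mul _ (by fun_prop) (by fun_prop)]
        exact lintegral_subtype_comap measurableSet_Ioi fun s : ℝ =>
          ENNReal.ofReal (s ^ (Module.finrank ℝ E - 1)) * f (s • (θ : E))

section IsotropicMeasure

variable {E : Type*} [NormedAddCommGroup E] [NormedSpace ℝ E] [FiniteDimensional ℝ E]
  [MeasurableSpace E] [BorelSpace E]

/-- The isotropic Lévy measure `ℓ(|h|) |h|^{-d} μ(dh)` on the unit ball of the `d`-dimensional
space `E`, to which the Lévy measures with comparable density reduce. -/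
def isotropicMeasure (μ : Measure E) (ℓ : ℝ → ℝ) : Measure E :=
  (μ.restrict (ball 0 1)).withDensity fun h => ENNReal.ofReal (ℓ ‖h‖ / ‖h‖ ^ Module.finrank ℝ E)

variable [Nontrivial E] (μ : Measure E) [μ.IsAddHaarMeasure] {ℓ : ℝ → ℝ}

lemma lintegral_isotropicMeasure (hmeas : Measurable ℓ) {f : E → ℝ≥0∞} (hf : Measurable f) :
    ∫⁻ h, f h ∂isotropicMeasure μ ℓ =
      ∫⁻ θ : sphere (0 : E) 1, ∫⁻ s, f (s • (θ : E)) ∂radialMeasure ℓ ∂μ.toSphere := by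
  rw [isotropicMeasure, lintegral_withDensity_eq_lintegral_mul _ (by fun_prop) hf,
    ← lintegral_indicator measurableSet_ball,
    lintegral_eq_lintegral_toSphere μ (.indicator (by fun_prop) measurableSet_ball)]
  refine lintegral_congr fun θ => ?_
  rw [lintegral_radialMeasure hmeas (by fun_prop), ← Ioi_inter_Iio, inter_comm,
    ← setLIntegral_indicator measurableSet_Iio]
  refine setLIntegral_congr_fun measurableSet_Ioi fun s (hs : 0 < s) => ?_
  have hnorm : ‖s • (θ : E)‖ = s := by
    rw [norm_smul, norm_eq_of_mem_sphere, mul_one, Real.norm_of_nonneg hs.le]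
  by_cases hs₁ : s < 1
  · rw [indicator_of_mem (by simpa [hnorm] using hs₁), indicator_of_mem (mem_Iio.2 hs₁),
      Pi.mul_apply, hnorm, ← mul_assoc, ← ENNReal.ofReal_mul (by positivity)]
    have hpow : s ^ Module.finrank ℝ E = s ^ (Module.finrank ℝ E - 1) * s :=
      (pow_sub_one_mul Module.finrank_pos.ne' s).symm
    rw [hpow]
    congr 2
    field_simp
  · rw [indicator_of_notMem (by simpa [hnorm] using hs₁), indicator_of_notMem (by simpa using hs₁),
      mul_zero]

lemma lintegral_norm_sq_isotropicMeasure (hmeas : Measurable ℓ) :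
    ∫⁻ h, ENNReal.ofReal (‖h‖ ^ 2) ∂isotropicMeasure μ ℓ =
      secondMoment (radialMeasure ℓ) * μ.toSphere univ := by
  rw [lintegral_isotropicMeasure μ hmeas (by fun_prop), ← lintegral_const]
  simp only [norm_smul, norm_eq_of_mem_sphere, mul_one, Real.norm_eq_abs, sq_abs, secondMoment]

end IsotropicMeasure

lemma half_le_inner_of_dist_le_one {E : Type*} [NormedAddCommGroup E] [InnerProductSpace ℝ E]
    {x y : E} (hx : ‖x‖ = 1) (hy : ‖y‖ = 1) (hxy : dist x y ≤ 1) : 1 / 2 ≤ ⟪x, y⟫ := by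
  have hsq : ‖x - y‖ ^ 2 ≤ 1 := pow_le_one₀ (norm_nonneg _) (by rwa [← dist_eq_norm])
  rw [norm_sub_sq_real, hx, hy] at hsq
  linarith

section IsotropicLevyExponent

variable {E : Type*} [NormedAddCommGroup E] [InnerProductSpace ℝ E] [FiniteDimensional ℝ E]
  [Nontrivial E] [MeasurableSpace E] [BorelSpace E] (μ : Measure E) [μ.IsAddHaarMeasure]
  {ℓ : ℝ → ℝ} {ρ : ℝ}

lemma levyExponent_isotropicMeasure (hmeas : Measurable ℓ) (ξ : E) :
    levyExponent (isotropicMeasure μ ℓ) ξ =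
      ∫⁻ θ : sphere (0 : E) 1, levyExponent (radialMeasure ℓ) ⟪ξ, (θ : E)⟫ ∂μ.toSphere := by
  rw [levyExponent, lintegral_isotropicMeasure μ hmeas (by fun_prop)]
  simp only [levyExponent_eq_lintegral_mul, inner_smul_right, mul_comm]

lemma RegVaryAt0.exists_levyExponent_isotropicMeasure_le (hℓ : RegVaryAt0 ℓ ρ) (hρ : -2 < ρ)
    (hmeas : Measurable ℓ) (hpos : ∀ s : ℝ, 0 < s → s < 1 → 0 < ℓ s)
    (hfin : secondMoment (radialMeasure ℓ) ≠ ∞) {R₀ : ℝ} (hR₀ : 1 < R₀) :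
    ∃ C ≠ ∞, ∀ ξ : E, R₀ ≤ ‖ξ‖ →
      levyExponent (isotropicMeasure μ ℓ) ξ ≤ C * radialMeasure ℓ (Ici ‖ξ‖⁻¹) := by
  have hR₀_pos : 0 < R₀ := one_pos.trans hR₀
  obtain ⟨C, hC, hle⟩ := hℓ.exists_levyExponent_le hρ hmeas hpos hfin
    (inv_pos.2 hR₀_pos) (inv_lt_one_of_one_lt₀ hR₀)
  refine ⟨C * μ.toSphere univ, by finiteness, fun ξ hξ => ?_⟩
  have hξ_pos : 0 < ‖ξ‖ := hR₀_pos.trans_le hξ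
  have hinner : ∀ θ : sphere (0 : E) 1, |⟪ξ, (θ : E)⟫| * ‖ξ‖⁻¹ ≤ 1 := fun θ =>
    mul_inv_le_one_of_le₀ (by simpa using abs_real_inner_le_norm ξ (θ : E)) hξ_pos.le
  calc levyExponent (isotropicMeasure μ ℓ) ξ
      = ∫⁻ θ : sphere (0 : E) 1, levyExponent (radialMeasure ℓ) ⟪ξ, (θ : E)⟫ ∂μ.toSphere :=
        levyExponent_isotropicMeasure μ hmeas ξ
    _ ≤ ∫⁻ _ : sphere (0 : E) 1, C * radialMeasure ℓ (Ici ‖ξ‖⁻¹) ∂μ.toSphere :=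
        lintegral_mono fun θ => hle _ _ (inv_pos.2 hξ_pos) (inv_anti₀ hR₀_pos hξ) (hinner θ)
    _ = C * μ.toSphere univ * radialMeasure ℓ (Ici ‖ξ‖⁻¹) := by
        rw [lintegral_const, mul_right_comm]

lemma RegVaryAt0.exists_measure_Ici_le_levyExponent_isotropicMeasure (hℓ : RegVaryAt0 ℓ ρ)
    (hmeas : Measurable ℓ) (hpos : ∀ s : ℝ, 0 < s → s < 1 → 0 < ℓ s)
    (hfin : secondMoment (radialMeasure ℓ) ≠ ∞) {R₀ : ℝ} (hR₀ : 0 < R₀) :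
    ∃ C ≠ ∞, ∀ ξ : E, R₀ ≤ ‖ξ‖ →
      radialMeasure ℓ (Ici ‖ξ‖⁻¹) ≤ C * levyExponent (isotropicMeasure μ ℓ) ξ := by
  obtain ⟨C, hC, hle⟩ := hℓ.exists_measure_Ici_le_levyExponent hmeas hpos hfin (half_pos hR₀)
  set b : ℝ≥0∞ := Measure.toSphereBallBound (Module.finrank ℝ E) 1 * μ (ball 0 1)
  have hb : b ≠ 0 := mul_ne_zero
    (ENNReal.coe_ne_zero.2 (Measure.toSphereBallBound_pos _ _).ne')
    (measure_ball_pos μ _ one_pos).ne'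
  have hb_top : b ≠ ∞ := by finiteness
  refine ⟨b⁻¹ * C, by finiteness, fun ξ hξ => ?_⟩
  have hξ_pos : 0 < ‖ξ‖ := hR₀.trans_le hξ
  let e : sphere (0 : E) 1 := ⟨‖ξ‖⁻¹ • ξ, by simp [norm_smul, hξ_pos.ne']⟩
  have hinner : ∀ θ ∈ ball e 1, ‖ξ‖ / 2 ≤ |⟪ξ, (θ : E)⟫| := fun θ hθ => by
    have hcap := half_le_inner_of_dist_le_one (norm_eq_of_mem_sphere e) (norm_eq_of_mem_sphere θ)
      (mem_ball'.1 hθ).le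
    rw [real_inner_smul_left, le_inv_mul_iff₀ hξ_pos] at hcap
    exact le_trans (by linarith) (le_abs_self _)
  rw [mul_assoc, ← ENNReal.mul_le_iff_le_inv hb hb_top]
  calc b * radialMeasure ℓ (Ici ‖ξ‖⁻¹)
      ≤ μ.toSphere (ball e 1) * radialMeasure ℓ (Ici ‖ξ‖⁻¹) := by
        gcongr
        exact μ.toSphereBallBound_mul_measure_unitBall_le_toSphere_ball one_pos e
    _ = ∫⁻ _ in ball e 1, radialMeasure ℓ (Ici ‖ξ‖⁻¹) ∂μ.toSphere := by
        rw [setLIntegral_const, mul_comm]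
    _ ≤ ∫⁻ θ in ball e 1, C * levyExponent (radialMeasure ℓ) ⟪ξ, (θ : E)⟫ ∂μ.toSphere := by
        refine setLIntegral_mono' measurableSet_ball fun θ hθ => ?_
        refine hle _ _ (le_trans (by linarith) (hinner θ hθ)) (inv_pos.2 hξ_pos) ?_
        rw [← div_eq_mul_inv, le_div_iff₀ hξ_pos]
        linarith [hinner θ hθ]
    _ ≤ C * levyExponent (isotropicMeasure μ ℓ) ξ := by
        rw [lintegral_const_mul' _ _ hC, levyExponent_isotropicMeasure μ hmeas]
        gcongr
        exact Measure.restrict_le_self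

end IsotropicLevyExponent

lemma ae_restrict_ball_zero_one_norm {E : Type*} [NormedAddCommGroup E] [MeasurableSpace E]
    [BorelSpace E] {μ : Measure E} [NullSingletonClass μ] :
    ∀ᵐ h ∂μ.restrict (ball 0 1), 0 < ‖h‖ ∧ ‖h‖ < 1 := by
  filter_upwards [ae_restrict_mem measurableSet_ball,
    ae_restrict_of_ae (compl_mem_ae_iff.2 (measure_singleton (0 : E)))] with h hball hne
  exact ⟨norm_pos_iff.2 hne, mem_ball_zero_iff.1 hball⟩

section LevyDensity

variable {E : Type*} [NormedAddCommGroup E] [NormedSpace ℝ E] [MeasurableSpace E]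
  [BorelSpace E] {μ : Measure E} {ℓ : ℝ → ℝ} {κ K₀ : ℝ} {k : E → ℝ}

/-- `k` is the density with respect to `μ` of a Lévy measure whose truncated second moment is at
most `K₀`, and it is comparable to `ℓ(|h|) |h|^{-d}` up to the factor `κ` near the origin. -/
structure IsComparableLevyDensity (μ : Measure E) (ℓ : ℝ → ℝ) (κ K₀ : ℝ) (k : E → ℝ) : Prop where
  measurable : Measurable k
  nonneg : ∀ h, 0 ≤ k h
  lintegral_le : ∫⁻ h, ENNReal.ofReal (min 1 (‖h‖ ^ 2) * k h) ∂μ ≤ ENNReal.ofReal K₀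
  inv_mul_le : ∀ h, 0 < ‖h‖ → ‖h‖ < 1 → κ⁻¹ * (ℓ ‖h‖ / ‖h‖ ^ Module.finrank ℝ E) ≤ k h
  le_mul : ∀ h, 0 < ‖h‖ → ‖h‖ < 1 → k h ≤ κ * (ℓ ‖h‖ / ‖h‖ ^ Module.finrank ℝ E)

namespace IsComparableLevyDensity

lemma measure_compl_ball_le (hk : IsComparableLevyDensity μ ℓ κ K₀ k) :
    μ.withDensity (fun h => ENNReal.ofReal (k h)) (ball 0 1)ᶜ ≤ ENNReal.ofReal K₀ := by
  rw [withDensity_apply _ measurableSet_ball.compl]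
  refine le_trans (setLIntegral_mono' measurableSet_ball.compl fun h hh => ?_)
    ((setLIntegral_le_lintegral _ _).trans hk.lintegral_le)
  have hh₁ : 1 ≤ ‖h‖ := by simpa using hh
  rw [min_eq_left (one_le_pow₀ hh₁), one_mul]

lemma withDensity_le (hk : IsComparableLevyDensity μ ℓ κ K₀ k) [NullSingletonClass μ] (hκ : 0 < κ) :
    μ.withDensity (fun h => ENNReal.ofReal (k h)) ≤ ENNReal.ofReal κ • isotropicMeasure μ ℓ +
      (μ.withDensity fun h => ENNReal.ofReal (k h)).restrict (ball 0 1)ᶜ := by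
  conv_lhs =>
    rw [← Measure.restrict_add_restrict_compl (μ := μ.withDensity _)
      (measurableSet_ball (x := (0 : E)) (ε := 1))]
  gcongr
  rw [restrict_withDensity measurableSet_ball, isotropicMeasure,
    ← withDensity_smul' _ _ ENNReal.ofReal_ne_top]
  refine withDensity_mono ?_
  filter_upwards [ae_restrict_ball_zero_one_norm] with h hh
  rw [Pi.smul_apply, smul_eq_mul, ← ENNReal.ofReal_mul hκ.le]
  exact ENNReal.ofReal_le_ofReal (hk.le_mul h hh.1 hh.2)

lemma isotropicMeasure_le (hk : IsComparableLevyDensity μ ℓ κ K₀ k) [NullSingletonClass μ]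
    (hκ : 0 < κ) :
    isotropicMeasure μ ℓ ≤ ENNReal.ofReal κ • μ.withDensity fun h => ENNReal.ofReal (k h) := by
  rw [← withDensity_smul' _ _ ENNReal.ofReal_ne_top]
  refine (withDensity_mono ?_).trans
    ((restrict_withDensity measurableSet_ball _).symm.le.trans Measure.restrict_le_self)
  filter_upwards [ae_restrict_ball_zero_one_norm] with h hh
  rw [Pi.smul_apply, smul_eq_mul, ← ENNReal.ofReal_mul hκ.le]
  exact ENNReal.ofReal_le_ofReal ((inv_mul_le_iff₀ hκ).1 (hk.inv_mul_le h hh.1 hh.2))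

lemma secondMoment_radialMeasure_ne_top [FiniteDimensional ℝ E] [Nontrivial E]
    [μ.IsAddHaarMeasure] (hk : IsComparableLevyDensity μ ℓ κ K₀ k) (hκ : 0 < κ)
    (hmeas : Measurable ℓ) : secondMoment (radialMeasure ℓ) ≠ ∞ := fun htop => by
  have hle : ∫⁻ h, ENNReal.ofReal (‖h‖ ^ 2) ∂isotropicMeasure μ ℓ ≤
      ENNReal.ofReal κ * ENNReal.ofReal K₀ := by
    refine le_trans ?_ (mul_le_mul_right hk.lintegral_le _)
    rw [isotropicMeasure, lintegral_withDensity_eq_lintegral_mul _ (by fun_prop) (by fun_prop),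
      ← lintegral_const_mul' _ _ ENNReal.ofReal_ne_top]
    refine (lintegral_mono_ae ?_).trans (setLIntegral_le_lintegral (ball 0 1) _)
    filter_upwards [ae_restrict_ball_zero_one_norm] with h ⟨hh₀, hh₁⟩
    rw [Pi.mul_apply, ← ENNReal.ofReal_mul' (sq_nonneg _), ← ENNReal.ofReal_mul hκ.le,
      min_eq_right (pow_le_one₀ hh₀.le hh₁.le), mul_left_comm, mul_comm (_ ^ 2)]
    gcongr
    exact (inv_mul_le_iff₀ hκ).1 (hk.inv_mul_le h hh₀ hh₁)
  rw [lintegral_norm_sq_isotropicMeasure μ hmeas, htop,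
    ENNReal.top_mul (Measure.measure_univ_ne_zero.2 μ.toSphere_ne_zero), top_le_iff] at hle
  exact absurd hle (by finiteness)

end IsComparableLevyDensity

end LevyDensity

section LevyDensityExponent

variable {E : Type*} [NormedAddCommGroup E] [InnerProductSpace ℝ E] [FiniteDimensional ℝ E]
  [MeasurableSpace E] [BorelSpace E]

lemma integral_one_sub_cos_mul_eq_toReal_levyExponent {μ : Measure E} {k : E → ℝ}
    (hk : Measurable k) (hk₀ : ∀ h, 0 ≤ k h) (ξ : E) : ∫ h, (1 - Real.cos ⟪ξ, h⟫) * k h ∂μ =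
      (levyExponent (μ.withDensity fun h => ENNReal.ofReal (k h)) ξ).toReal := by
  rw [integral_eq_lintegral_of_nonneg_ae
      (.of_forall fun h => mul_nonneg (one_sub_cos_nonneg _) (hk₀ h)) (by fun_prop), levyExponent,
    lintegral_withDensity_eq_lintegral_mul _ (by fun_prop) (by fun_prop)]
  congr 1
  refine lintegral_congr fun h => ?_
  rw [mul_comm, ENNReal.ofReal_mul (hk₀ h), Pi.mul_apply]

variable [Nontrivial E] (μ : Measure E) [μ.IsAddHaarMeasure] {ℓ : ℝ → ℝ} {ρ κ : ℝ}

lemma RegVaryAt0.exists_levyExponent_withDensity_le (hℓ : RegVaryAt0 ℓ ρ) (hρ : -2 < ρ)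
    (hmeas : Measurable ℓ) (hpos : ∀ s : ℝ, 0 < s → s < 1 → 0 < ℓ s)
    (hfin : secondMoment (radialMeasure ℓ) ≠ ∞) (hκ : 0 < κ) (K₀ : ℝ) {R₀ : ℝ} (hR₀ : 1 < R₀) :
    ∃ C ≠ ∞, ∀ k, IsComparableLevyDensity μ ℓ κ K₀ k → ∀ ξ : E, R₀ ≤ ‖ξ‖ →
      levyExponent (μ.withDensity fun h => ENNReal.ofReal (k h)) ξ ≤
        C * radialMeasure ℓ (Ici ‖ξ‖⁻¹) := by
  obtain ⟨C, hC, hle⟩ := hℓ.exists_levyExponent_isotropicMeasure_le μ hρ hmeas hpos hfin hR₀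
  have hR₀_inv : 0 < R₀⁻¹ := inv_pos.2 (one_pos.trans hR₀)
  have hν_ne_zero := radialMeasure_Ici_ne_zero hmeas hpos hR₀_inv.le (inv_lt_one_of_one_lt₀ hR₀)
  refine ⟨ENNReal.ofReal κ * C + 2 * ENNReal.ofReal K₀ * (radialMeasure ℓ (Ici R₀⁻¹))⁻¹,
    by finiteness, fun k hk ξ hξ => ?_⟩
  refine (levyExponent_mono (hk.withDensity_le hκ) ξ).trans ?_
  rw [levyExponent_add, levyExponent_smul, add_mul, mul_assoc]
  gcongr
  · exact hle ξ hξ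
  calc levyExponent ((μ.withDensity fun h => ENNReal.ofReal (k h)).restrict (ball 0 1)ᶜ) ξ
      ≤ 2 * ENNReal.ofReal K₀ := (levyExponent_le_two_mul_measure_univ _ _).trans (by
        rw [Measure.restrict_apply_univ]
        gcongr
        exact hk.measure_compl_ball_le)
    _ ≤ _ := le_mul_inv_mul_of_le hν_ne_zero
        (measure_Ici_ne_top_of_secondMoment_ne_top hfin hR₀_inv)
        (measure_mono (Ici_subset_Ici.2 (inv_anti₀ (one_pos.trans hR₀) hξ)))

lemma RegVaryAt0.exists_measure_Ici_le_levyExponent_withDensity (hℓ : RegVaryAt0 ℓ ρ)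
    (hmeas : Measurable ℓ) (hpos : ∀ s : ℝ, 0 < s → s < 1 → 0 < ℓ s)
    (hfin : secondMoment (radialMeasure ℓ) ≠ ∞) (hκ : 0 < κ) {R₀ : ℝ} (hR₀ : 0 < R₀) :
    ∃ C ≠ ∞, ∀ (K₀ : ℝ) (k : E → ℝ), IsComparableLevyDensity μ ℓ κ K₀ k → ∀ ξ : E, R₀ ≤ ‖ξ‖ →
      radialMeasure ℓ (Ici ‖ξ‖⁻¹) ≤
        C * levyExponent (μ.withDensity fun h => ENNReal.ofReal (k h)) ξ := by
  obtain ⟨C, hC, hle⟩ :=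
    hℓ.exists_measure_Ici_le_levyExponent_isotropicMeasure μ hmeas hpos hfin hR₀
  refine ⟨C * ENNReal.ofReal κ, by finiteness, fun K₀ k hk ξ hξ => (hle ξ hξ).trans ?_⟩
  rw [mul_assoc]
  gcongr
  rw [← levyExponent_smul]
  exact levyExponent_mono (hk.isotropicMeasure_le hκ) ξ

end LevyDensityExponent

lemma inv_mul_toReal_le_and_toReal_le_mul {C₁ C₂ x y : ℝ≥0∞} (hC₁ : C₁ ≠ ∞) (hC₂ : C₂ ≠ ∞)
    (hx : x ≠ ∞) (hyx : y ≤ C₁ * x) (hxy : x ≤ C₂ * y) :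
    (C₁ + C₂ + 1).toReal⁻¹ * x.toReal ≤ y.toReal ∧ y.toReal ≤ (C₁ + C₂ + 1).toReal * x.toReal := by
  have hC : C₁ + C₂ + 1 ≠ ∞ := by finiteness
  have hy : y ≠ ∞ := ne_top_of_le_ne_top (by finiteness) hyx
  rw [inv_mul_le_iff₀ (ENNReal.toReal_pos (by simp) hC), ← ENNReal.toReal_mul,
    ← ENNReal.toReal_mul]
  constructor
  · exact ENNReal.toReal_mono (by finiteness)
      (hxy.trans (by gcongr; exact le_add_right le_add_self))
  · exact ENNReal.toReal_mono (by finiteness)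
      (hyx.trans (by gcongr; exact le_add_right le_self_add))

theorem statement2_general {E : Type*} [NormedAddCommGroup E] [InnerProductSpace ℝ E]
    [FiniteDimensional ℝ E] [Nontrivial E] [MeasurableSpace E] [BorelSpace E] (μ : Measure E)
    [μ.IsAddHaarMeasure] (K₀ : ℝ) {κ ρ R₀ : ℝ} (hκ : 0 < κ) (hρ : -2 < ρ) (hR₀ : 1 < R₀) {ℓ : ℝ → ℝ}
    (hmeas : Measurable ℓ) (hpos : ∀ s : ℝ, 0 < s → s < 1 → 0 < ℓ s) (hℓ : RegVaryAt0 ℓ ρ) :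
    ∃ c : ℝ, 0 < c ∧ ∀ k, IsComparableLevyDensity μ ℓ κ K₀ k → ∀ ξ : E, R₀ ≤ ‖ξ‖ →
      c⁻¹ * Lfun ℓ ‖ξ‖⁻¹ ≤ ∫ h, (1 - Real.cos ⟪ξ, h⟫) * k h ∂μ ∧
        ∫ h, (1 - Real.cos ⟪ξ, h⟫) * k h ∂μ ≤ c * Lfun ℓ ‖ξ‖⁻¹ := by
  by_cases hfin : secondMoment (radialMeasure ℓ) = ∞
  · exact ⟨1, one_pos, fun k hk => absurd hfin (hk.secondMoment_radialMeasure_ne_top hκ hmeas)⟩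
  have hR₀_pos : 0 < R₀ := one_pos.trans hR₀
  obtain ⟨C₁, hC₁, hupper⟩ :=
    hℓ.exists_levyExponent_withDensity_le μ hρ hmeas hpos hfin hκ K₀ hR₀
  obtain ⟨C₂, hC₂, hlower⟩ :=
    hℓ.exists_measure_Ici_le_levyExponent_withDensity μ hmeas hpos hfin hκ hR₀_pos
  refine ⟨(C₁ + C₂ + 1).toReal, ENNReal.toReal_pos (by simp) (by finiteness), fun k hk ξ hξ => ?_⟩
  have hξ_inv : 0 < ‖ξ‖⁻¹ := inv_pos.2 (hR₀_pos.trans_le hξ)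
  rw [integral_one_sub_cos_mul_eq_toReal_levyExponent hk.measurable hk.nonneg,
    ← toReal_radialMeasure_Ici hmeas hpos hξ_inv (inv_le_one_of_one_le₀ (hR₀.le.trans hξ))]
  exact inv_mul_toReal_le_and_toReal_le_mul hC₁ hC₂
    (measure_Ici_ne_top_of_secondMoment_ne_top hfin hξ_inv) (hupper k hk ξ hξ) (hlower K₀ k hk ξ hξ)

lemma KernelCondsTI.isComparableLevyDensity {d : ℕ} (hd : 1 ≤ d) {K₀ κ : ℝ} {ℓ : ℝ → ℝ}
    {k : EuclideanSpace ℝ (Fin d) → ℝ} (hk : KernelCondsTI d K₀ κ ℓ k) :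
    IsComparableLevyDensity volume ℓ κ K₀ k := by
  have : Nonempty (Fin d) := ⟨⟨0, hd⟩⟩
  obtain ⟨hmeas, hnonneg, -, hint, hbounds⟩ := hk
  rw [restrict_compl_singleton] at hint
  exact ⟨hmeas, hnonneg, hint,
    fun h h₀ h₁ => by simpa only [finrank_euclideanSpace_fin] using (hbounds h h₀ h₁.le).1,
    fun h h₀ h₁ => by simpa only [finrank_euclideanSpace_fin] using (hbounds h h₀ h₁.le).2⟩

/-- There exists `c > 0`, depending only on `d, K₀, κ, α, ℓ`, such that
`c⁻¹ L(|ξ|⁻¹) ≤ ψ(ξ) ≤ c L(|ξ|⁻¹)` for all `ξ ∈ ℝ^d` with `|ξ| ≥ 5`. -/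
theorem statement2 (d : ℕ) (hd : 1 ≤ d) (K₀ κ α : ℝ) (hK₀ : 0 < K₀) (hκ : 1 < κ)
    (hα₀ : 0 ≤ α) (hα₂ : α < 2) (ℓ : ℝ → ℝ) (hℓmeas : Measurable ℓ)
    (hℓpos : ∀ s : ℝ, 0 < s → s < 1 → 0 < ℓ s)
    (hℓbdd : LocBddAway ℓ) (hℓreg : RegVaryAt0 ℓ (-α)) :
    ∃ c : ℝ, 0 < c ∧
      ∀ k : EuclideanSpace ℝ (Fin d) → ℝ, KernelCondsTI d K₀ κ ℓ k →
        ∀ ξ : EuclideanSpace ℝ (Fin d), 5 ≤ ‖ξ‖ →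
          c⁻¹ * Lfun ℓ (‖ξ‖⁻¹) ≤ psiFun d k ξ ∧ psiFun d k ξ ≤ c * Lfun ℓ (‖ξ‖⁻¹) := by
  have : Nonempty (Fin d) := ⟨⟨0, hd⟩⟩
  obtain ⟨c, hc, hbounds⟩ := statement2_general (volume : Measure (EuclideanSpace ℝ (Fin d))) K₀
    (one_pos.trans hκ) (neg_lt_neg hα₂) (by norm_num : (1 : ℝ) < 5) hℓmeas hℓpos hℓreg
  refine ⟨c, hc, fun k hk ξ hξ => ?_⟩
  rw [psiFun, restrict_compl_singleton]
  exact hbounds k (hk.isComparableLevyDensity hd) ξ hξ
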